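/- Let SO(3) act diagonally on V = ℂ³ ⊕ ℂ³ (complexified standard action on each factor), with moment map J(z₁,z₂)(ξ) = Im(⟨ξz₁, z₁⟩ + ⟨ξz₂, z₂⟩) for ξ ∈ so(3), M = J⁻¹(0), and symplectic quotient M₀ = M/SO(3) with the quotient topology. Then for every m ≥ 1 and every finite subgroup H of U(m), there is no ℤ-graded regular diffeomorphism from M₀ to the linear symplectic orbifold ℂᵐ/H. -/

import Mathlib

/-!
Statement 8: For the diagonal SO(3)-action on ℂ³ ⊕ ℂ³ (the SU(2)-module 2R₂) with symplectic
quotient M₀, there is no ℤ-graded regular diffeomorphism from M₀ to any linear symplectic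
orbifold ℂᵐ/H.
-/

namespace Stmt8

noncomputable section

open MvPolynomial Complex

/-- Evaluation of a real polynomial in the real coordinates (indexed by `ι × Bool`) at a
point of `ι → ℂ`. -/
def evalR {ι : Type} (p : MvPolynomial (ι × Bool) ℝ) (z : ι → ℂ) : ℝ :=
  MvPolynomial.eval (fun q => if q.2 then (z q.1).im else (z q.1).re) p

/-- The special orthogonal group SO(3) as a set of matrices. -/
def SO3 : Set (Matrix (Fin 3) (Fin 3) ℝ) :=
  {g | g * g.transpose = 1 ∧ g.det = 1}

/-- The diagonal action of `g` on ℂ³ ⊕ ℂ³. -/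
def act (g : Matrix (Fin 3) (Fin 3) ℝ) (z : (Fin 3 → ℂ) × (Fin 3 → ℂ)) :
    (Fin 3 → ℂ) × (Fin 3 → ℂ) :=
  ((g.map Complex.ofReal).mulVec z.1, (g.map Complex.ofReal).mulVec z.2)

/-- Hermitian pairing `⟨ξ z, z⟩` of a real matrix `ξ` applied to `z` against `z`. -/
def pair (ξ : Matrix (Fin 3) (Fin 3) ℝ) (z : Fin 3 → ℂ) : ℂ :=
  ∑ i, (ξ.map Complex.ofReal).mulVec z i * (starRingEnd ℂ) (z i)

/-- The zero set `M = J⁻¹(0)` of the moment map `J(z)(ξ) = Im(⟨ξz₁,z₁⟩ + ⟨ξz₂,z₂⟩)`. -/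
def M : Set ((Fin 3 → ℂ) × (Fin 3 → ℂ)) :=
  {z | ∀ ξ : Matrix (Fin 3) (Fin 3) ℝ, ξ.transpose = -ξ →
    (pair ξ z.1 + pair ξ z.2).im = 0}

/-- Orbit equivalence on `M` for the SO(3)-action. -/
def relM (x y : M) : Prop :=
  ∃ g ∈ SO3, (y : (Fin 3 → ℂ) × (Fin 3 → ℂ)) = act g (x : (Fin 3 → ℂ) × (Fin 3 → ℂ))

/-- The symplectic quotient `M₀ = M/SO(3)` with the quotient topology. -/
def M₀ : Type := Quot relM

instance : TopologicalSpace M₀ := instTopologicalSpaceQuot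

/-- The complex coordinates of a point of ℂ³ ⊕ ℂ³, as a function `Fin 3 ⊕ Fin 3 → ℂ`. -/
def cc (z : (Fin 3 → ℂ) × (Fin 3 → ℂ)) : Fin 3 ⊕ Fin 3 → ℂ := Sum.elim z.1 z.2

/-- The degree-`d` regular functions on `M₀`: functions induced by restriction to `M` of
SO(3)-invariant real polynomial functions on ℂ³ ⊕ ℂ³ homogeneous of degree `d`. -/
def RegM (d : ℕ) : Set (M₀ → ℝ) :=
  {f | ∃ p : MvPolynomial ((Fin 3 ⊕ Fin 3) × Bool) ℝ, p.IsHomogeneous d ∧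
    (∀ g ∈ SO3, ∀ z : (Fin 3 → ℂ) × (Fin 3 → ℂ), evalR p (cc (act g z)) = evalR p (cc z)) ∧
    ∀ x : M, f (Quot.mk _ x) = evalR p (cc (x : (Fin 3 → ℂ) × (Fin 3 → ℂ)))}

/-- Orbit equivalence for a subgroup `H` of the unitary group acting on ℂᵐ. -/
def relH (m : ℕ) (H : Subgroup (Matrix.unitaryGroup (Fin m) ℂ)) (v w : Fin m → ℂ) : Prop :=
  ∃ h ∈ H, w = Matrix.mulVec (h : Matrix (Fin m) (Fin m) ℂ) v

/-- The linear symplectic orbifold ℂᵐ/H with the quotient topology. -/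
def Y (m : ℕ) (H : Subgroup (Matrix.unitaryGroup (Fin m) ℂ)) : Type := Quot (relH m H)

instance (m : ℕ) (H : Subgroup (Matrix.unitaryGroup (Fin m) ℂ)) : TopologicalSpace (Y m H) :=
  instTopologicalSpaceQuot

/-- The degree-`d` regular functions on `ℂᵐ/H`. -/
def RegY (m : ℕ) (H : Subgroup (Matrix.unitaryGroup (Fin m) ℂ)) (d : ℕ) :
    Set (Y m H → ℝ) :=
  {f | ∃ p : MvPolynomial (Fin m × Bool) ℝ, p.IsHomogeneous d ∧
    (∀ h ∈ H, ∀ v : Fin m → ℂ,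
      evalR p (Matrix.mulVec (h : Matrix (Fin m) (Fin m) ℂ) v) = evalR p v) ∧
    ∀ v : Fin m → ℂ, f (Quot.mk _ v) = evalR p v}

/-!
Only the regular functions of degree 2, which come from invariant quadratic forms, are needed.
Suppose they and the points of `M₀` were presented by a representation of a finite group `H` on a
real vector space `V`.

For real `t`, the classes of the pairs `(n, t n)` with `n ∈ ℝ³` form the zero set of a nonnegative
regular function of degree 2, and `|n|²` separates them. In `V` this zero set is a linear subspace,
the radical of a positive semidefinite form, and it is covered by the finitely many lines spanned
by the `H`-translates of a single vector. So it is a line, on which `H` acts by signs.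

Infinitely many slopes share the same sign character, so there are slopes `s ≠ t` with lifts
`a`, `b` of the classes of `(n, s n)` and `(n, t n)`, `|n| = 1`, on which every element of `H` acts
by the same sign; `a` and `b` are linearly independent. If `n'` is a unit vector orthogonal to `n`,
the half turn about `n` shows that an invariant quadratic form is additive on
`(n, s n) + (n', t n')`. A lift `c` of this sum therefore satisfies `Q c = Q a + Q b` for every
`H`-invariant form `Q`. Averaging over `H` puts `c` in the span of `a` and `b`, where `H` acts by
signs, so `Q c = Q a + Q b` for every quadratic form `Q`; but `c ⊗ c` has rank one and
`a ⊗ a + b ⊗ b` rank two.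
-/

section QuadraticForms

theorem exists_quadraticForm_eq_eval_of_isHomogeneous_two {σ R : Type*} [CommRing R]
    {p : MvPolynomial σ R} (hp : p.IsHomogeneous 2) :
    ∃ Q : QuadraticForm R (σ → R), ∀ x, Q x = eval x p := by
  rw [← mem_homogeneousSubmodule, ← homogeneousSubmodule_one_pow, pow_two,
    homogeneousSubmodule_one_eq_span_X, Submodule.span_mul_span] at hp
  induction hp using Submodule.span_induction with
  | mem p hp =>
    obtain ⟨_, ⟨i, rfl⟩, _, ⟨j, rfl⟩, rfl⟩ := hp
    exact ⟨QuadraticMap.proj i j, by simp⟩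
  | zero => exact ⟨0, by simp⟩
  | add p q _ _ hp hq =>
    obtain ⟨P, hP⟩ := hp
    obtain ⟨Q, hQ⟩ := hq
    exact ⟨P + Q, by simp [hP, hQ]⟩
  | smul r p _ hp =>
    obtain ⟨P, hP⟩ := hp
    exact ⟨r • P, by simp [hP]⟩

theorem exists_isHomogeneous_two_eval_eq {σ R : Type*} [CommRing R] [Finite σ]
    (Q : QuadraticForm R (σ → R)) :
    ∃ p : MvPolynomial σ R, p.IsHomogeneous 2 ∧ ∀ x, eval x p = Q x := by
  classical
  have := Fintype.ofFinite σ
  obtain ⟨B, rfl⟩ := LinearMap.BilinMap.toQuadraticMap_surjective Q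
  refine ⟨∑ i, ∑ j, C (B (Pi.single i 1) (Pi.single j 1)) * (X i * X j),
    .sum _ _ _ fun i _ ↦ .sum _ _ _ fun j _ ↦
      ((isHomogeneous_X R i).mul (isHomogeneous_X R j)).C_mul _, fun x ↦ ?_⟩
  rw [LinearMap.BilinMap.toQuadraticMap_apply]
  conv_rhs => rw [← LinearMap.sum_repr_mul_repr_mul (Pi.basisFun R σ) (Pi.basisFun R σ) x x]
  simp [Finsupp.sum_fintype, mul_assoc, mul_comm, mul_left_comm]

/-- The real coordinates of a complex vector, indexed as in `evalR`. -/
def realCoords (ι : Type) : (ι → ℂ) ≃ₗ[ℝ] (ι × Bool → ℝ) where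
  toFun z q := if q.2 then (z q.1).im else (z q.1).re
  invFun x i := ⟨x (i, false), x (i, true)⟩
  map_add' z w := by ext ⟨i, _ | _⟩ <;> simp
  map_smul' r z := by ext ⟨i, _ | _⟩ <;> simp
  left_inv z := rfl
  right_inv x := by ext ⟨i, _ | _⟩ <;> simp

theorem exists_isHomogeneous_two_evalR_iff {ι : Type} [Finite ι] {F : (ι → ℂ) → ℝ} :
    (∃ p : MvPolynomial (ι × Bool) ℝ, p.IsHomogeneous 2 ∧ ∀ z, evalR p z = F z) ↔
      ∃ Q : QuadraticForm ℝ (ι → ℂ), ∀ z, Q z = F z := by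
  constructor
  · rintro ⟨p, hp, hF⟩
    obtain ⟨Q, hQ⟩ := exists_quadraticForm_eq_eval_of_isHomogeneous_two hp
    exact ⟨Q.comp (realCoords ι).toLinearMap, fun z ↦ (hQ (realCoords ι z)).trans (hF z)⟩
  · rintro ⟨Q, hQ⟩
    obtain ⟨p, hp, hpQ⟩ := exists_isHomogeneous_two_eval_eq (Q.comp (realCoords ι).symm.toLinearMap)
    refine ⟨p, hp, fun z ↦ (hpQ (realCoords ι z)).trans ?_⟩
    simp [hQ]

theorem quadraticForm_map_add_add_map_sub {R V : Type*} [CommRing R] [AddCommGroup V] [Module R V]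
    (Q : QuadraticForm R V) (x y : V) : Q (x + y) + Q (x - y) = 2 * (Q x + Q y) := by
  rw [sub_eq_add_neg, QuadraticMap.map_add Q x y, QuadraticMap.map_add Q x (-y),
    QuadraticMap.map_neg, QuadraticMap.polar_neg_right]
  ring

variable {K V : Type*} [Field K] [AddCommGroup V] [Module K V]

theorem exists_dual_eq_zero_and_ne_zero {a b : V} (hab : LinearIndependent K ![a, b]) :
    ∃ f : Module.Dual K V, f a = 0 ∧ f b ≠ 0 := by
  have hb : b ∉ K ∙ a := by
    rintro hb
    obtain ⟨r, rfl⟩ := Submodule.mem_span_singleton.1 hb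
    simpa using LinearIndependent.pair_iff.1 hab r (-1) (by simp)
  obtain ⟨f, hfb, hf⟩ := Submodule.exists_le_ker_of_notMem hb
  exact ⟨f, hf (Submodule.mem_span_singleton_self a), hfb⟩

theorem linearIndependent_pair_of_quadraticForm (P Q : QuadraticForm K V) {a b : V}
    (hPa : P a = 0) (hPb : P b ≠ 0) (hQa : Q a ≠ 0) (hQb : Q b = 0) :
    LinearIndependent K ![a, b] := by
  refine LinearIndependent.pair_iff.2 fun s t hst ↦ ?_
  have hs : s • a = (-t) • b := by simpa using eq_neg_of_add_eq_zero_left hst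
  have hP : P (s • a) = P (-t • b) := by rw [hs]
  have hQ : Q (s • a) = Q (-t • b) := by rw [hs]
  simp only [QuadraticMap.map_smul, hPa, hQb, smul_eq_mul, mul_zero] at hP hQ
  exact ⟨by simpa [hQa] using hQ, by simpa [hPb] using hP.symm⟩

/-- The symmetric tensor `a ⊗ a + b ⊗ b` has rank two, hence is not of the form `c ⊗ c`. -/
theorem exists_quadraticForm_apply_ne_add {a b : V} (hab : LinearIndependent K ![a, b]) (c : V) :
    ∃ Q : QuadraticForm K V, Q c ≠ Q a + Q b := by
  by_contra! hc
  obtain ⟨f, hfa, hfb⟩ := exists_dual_eq_zero_and_ne_zero hab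
  obtain ⟨g, hgb, hga⟩ := exists_dual_eq_zero_and_ne_zero (LinearIndependent.pair_symm_iff.1 hab)
  have hff : f c * f c = f b * f b := by simpa [hfa] using hc (QuadraticMap.linMulLin f f)
  have hgg : g c * g c = g a * g a := by simpa [hgb] using hc (QuadraticMap.linMulLin g g)
  have hfg : f c = 0 ∨ g c = 0 := by simpa [hfa, hgb] using hc (QuadraticMap.linMulLin f g)
  rcases hfg with hfc | hgc
  · exact hfb (by simpa [hfc] using hff)
  · exact hga (by simpa [hgc] using hgg)

variable [LinearOrder K] [IsStrictOrderedRing K]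

theorem apply_eq_zero_iff_mem_radical_of_nonneg {Q : QuadraticForm K V} (hQ : ∀ v, 0 ≤ Q v)
    {v : V} : Q v = 0 ↔ v ∈ Q.radical := by
  have hassoc (w : V) : QuadraticMap.associated Q w w = Q w :=
    QuadraticMap.associated_eq_self_apply K Q w
  rw [QuadraticMap.radical_eq_ker_associated, ← hassoc,
    LinearMap.BilinForm.apply_apply_same_eq_zero_iff _ (fun w ↦ (hassoc w).symm ▸ hQ w)
      ⟨QuadraticMap.associated_isSymm K Q⟩]

theorem le_of_subset_iUnion_subspace {ι : Type*} [Finite ι] {N : Submodule K V}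
    {p : ι → Submodule K V} (h : (N : Set V) ⊆ ⋃ i, (p i : Set V)) : ∃ i, N ≤ p i := by
  obtain ⟨i, hi⟩ := Subspace.exists_eq_top_of_iUnion_eq_univ (p := fun i ↦ (p i).comap N.subtype)
    (Set.eq_univ_of_forall fun v ↦ by simpa using h v.2)
  exact ⟨i, Submodule.comap_subtype_eq_top.1 hi⟩

end QuadraticForms

section InvariantForms

variable {K G V : Type*} [Field K] [Group G] [AddCommGroup V] [Module K V]
  {ρ : Representation K G V} {a b c : V}

theorem sum_quadraticForm_eq_add_of_invariant [Fintype G]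
    (hinv : ∀ Q : QuadraticForm K V, (∀ g v, Q (ρ g v) = Q v) → Q c = Q a + Q b)
    (Q : QuadraticForm K V) :
    ∑ g, Q (ρ g c) = ∑ g, Q (ρ g a) + ∑ g, Q (ρ g b) := by
  have := hinv (∑ g, Q.comp (ρ g)) fun h v ↦ by
    simpa using Fintype.sum_equiv (Equiv.mulRight h) _ _ fun g ↦ by simp
  simpa using this

variable [LinearOrder K] [IsStrictOrderedRing K]

theorem mem_of_quadraticForm_eq_add_of_invariant [Finite G] {W : Submodule K V}
    (hinv : ∀ Q : QuadraticForm K V, (∀ g v, Q (ρ g v) = Q v) → Q c = Q a + Q b)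
    (ha : ∀ g, ρ g a ∈ W) (hb : ∀ g, ρ g b ∈ W) : c ∈ W := by
  have := Fintype.ofFinite G
  by_contra hc
  obtain ⟨f, hfc, hf⟩ := Submodule.exists_le_ker_of_notMem hc
  have hsum := sum_quadraticForm_eq_add_of_invariant hinv (QuadraticMap.linMulLin f f)
  have hfa g : f (ρ g a) = 0 := hf (ha g)
  have hfb g : f (ρ g b) = 0 := hf (hb g)
  simp only [QuadraticMap.linMulLin_apply, hfa, hfb, mul_zero, Finset.sum_const_zero, add_zero,
    Finset.sum_eq_zero_iff_of_nonneg fun g _ ↦ mul_self_nonneg (f (ρ g c)),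
    mul_self_eq_zero] at hsum
  exact hfc (by simpa using hsum 1 (Finset.mem_univ 1))

theorem not_linearIndependent_pair_of_same_sign [Finite G]
    (hsign : ∀ g, (ρ g a = a ∧ ρ g b = b) ∨ (ρ g a = -a ∧ ρ g b = -b))
    (hinv : ∀ Q : QuadraticForm K V, (∀ g v, Q (ρ g v) = Q v) → Q c = Q a + Q b) :
    ¬LinearIndependent K ![a, b] := by
  intro hab
  have := Fintype.ofFinite G
  have ha_mem : a ∈ Submodule.span K {a, b} := Submodule.subset_span (by simp)
  have hb_mem : b ∈ Submodule.span K {a, b} := Submodule.subset_span (by simp)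
  have hc_mem : c ∈ Submodule.span K {a, b} := by
    refine mem_of_quadraticForm_eq_add_of_invariant hinv (fun g ↦ ?_) fun g ↦ ?_ <;>
    rcases hsign g with ⟨hga, hgb⟩ | ⟨hga, hgb⟩ <;> simpa [hga, hgb]
  obtain ⟨x, y, rfl⟩ := Submodule.mem_span_pair.1 hc_mem
  obtain ⟨Q, hQ⟩ := exists_quadraticForm_apply_ne_add hab (x • a + y • b)
  refine hQ ?_
  have hQ_apply (g : G) : Q (ρ g (x • a + y • b)) = Q (x • a + y • b) ∧
      Q (ρ g a) = Q a ∧ Q (ρ g b) = Q b := by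
    rcases hsign g with ⟨hga, hgb⟩ | ⟨hga, hgb⟩
    · simp [hga, hgb]
    · rw [map_add, map_smul, map_smul, hga, hgb, smul_neg, smul_neg, ← neg_add]
      simp only [QuadraticMap.map_neg, and_self]
  have hsum := sum_quadraticForm_eq_add_of_invariant hinv Q
  simp only [hQ_apply, Finset.sum_const, ← nsmul_add] at hsum
  exact nsmul_right_injective Fintype.card_ne_zero hsum

end InvariantForms

section Rotations

open Matrix

/-- The rotation by `π` about the axis `u` (equal to `-1` for `u = 0`). -/
def halfTurn (u : Fin 3 → ℝ) : Matrix (Fin 3) (Fin 3) ℝ :=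
  (2 / (u ⬝ᵥ u)) • vecMulVec u u - 1

theorem halfTurn_mulVec (u v : Fin 3 → ℝ) :
    halfTurn u *ᵥ v = (2 * (u ⬝ᵥ v) / (u ⬝ᵥ u)) • u - v := by
  rw [halfTurn, sub_mulVec, smul_mulVec, vecMulVec_mulVec, one_mulVec, op_smul_eq_smul, smul_smul,
    div_mul_eq_mul_div]

theorem halfTurn_mulVec_self {u : Fin 3 → ℝ} (hu : u ≠ 0) : halfTurn u *ᵥ u = u := by
  have : u ⬝ᵥ u ≠ 0 := dotProduct_self_eq_zero.not.2 hu
  rw [halfTurn_mulVec, mul_div_assoc, div_self this, mul_one, two_smul, add_sub_cancel_right]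

theorem halfTurn_mulVec_of_dotProduct_eq_zero {u v : Fin 3 → ℝ} (h : u ⬝ᵥ v = 0) :
    halfTurn u *ᵥ v = -v := by
  simp [halfTurn_mulVec, h]

theorem halfTurn_mem_SO3 {u : Fin 3 → ℝ} (hu : u ≠ 0) : halfTurn u ∈ SO3 := by
  have huu : u ⬝ᵥ u ≠ 0 := dotProduct_self_eq_zero.not.2 hu
  constructor
  · have htranspose : (halfTurn u)ᵀ = halfTurn u := by simp [halfTurn]
    refine htranspose.symm ▸ Matrix.ext_of_mulVec_single fun i ↦ ?_
    rw [← mulVec_mulVec, one_mulVec, halfTurn_mulVec u (Pi.single i 1), mulVec_sub, mulVec_smul,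
      halfTurn_mulVec_self hu, halfTurn_mulVec, sub_sub_cancel]
  · have hscale : 2 / (u ⬝ᵥ u) * (u 0 * u 0 + u 1 * u 1 + u 2 * u 2) = 2 := by
      rw [← vec3_dotProduct, div_mul_cancel₀ _ huu]
    simp only [halfTurn, det_fin_three, Matrix.sub_apply, Matrix.smul_apply, Matrix.one_apply,
      vecMulVec_apply, smul_eq_mul, Fin.reduceEq, if_true, if_false]
    linear_combination hscale

theorem exists_ne_zero_dotProduct_eq_zero (n : Fin 3 → ℝ) :
    ∃ u : Fin 3 → ℝ, u ≠ 0 ∧ u ⬝ᵥ n = 0 := by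
  obtain ⟨u, hu, hu0⟩ := Submodule.exists_mem_ne_zero_of_ne_bot
    (LinearMap.ker_ne_bot_of_finrank_lt (f := dotProductBilin ℝ ℝ n) (by simp))
  exact ⟨u, hu0, (dotProduct_comm u n).trans hu⟩

theorem exists_mem_SO3_mulVec_eq {n n' : Fin 3 → ℝ} (h : n ⬝ᵥ n = n' ⬝ᵥ n') :
    ∃ g ∈ SO3, g *ᵥ n = n' := by
  by_cases hadd : n + n' = 0
  · obtain ⟨u, hu, hun⟩ := exists_ne_zero_dotProduct_eq_zero n
    exact ⟨halfTurn u, halfTurn_mem_SO3 hu, by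
      rw [halfTurn_mulVec_of_dotProduct_eq_zero hun, eq_neg_of_add_eq_zero_right hadd]⟩
  · refine ⟨halfTurn (n + n'), halfTurn_mem_SO3 hadd, ?_⟩
    have hne : (n + n') ⬝ᵥ (n + n') ≠ 0 := dotProduct_self_eq_zero.not.2 hadd
    have htwo : 2 * ((n + n') ⬝ᵥ n) = (n + n') ⬝ᵥ (n + n') := by
      simp only [add_dotProduct, dotProduct_add, dotProduct_comm n' n, h]
      ring
    rw [halfTurn_mulVec, htwo, div_self hne, one_smul, add_sub_cancel_left]

end Rotations

section InvariantsOfSO3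

open Matrix

/-- Quadratic forms on the real vector space underlying `ℂ³ ⊕ ℂ³` that are invariant under the
diagonal action of `SO3`. -/
def IsSO3Invariant (Q : QuadraticForm ℝ ((Fin 3 → ℂ) × (Fin 3 → ℂ))) : Prop :=
  ∀ g ∈ SO3, ∀ z, Q (act g z) = Q z

/-- The function on `M₀` induced by an invariant quadratic form. -/
def IsSO3Invariant.descend {Q : QuadraticForm ℝ ((Fin 3 → ℂ) × (Fin 3 → ℂ))}
    (hQ : IsSO3Invariant Q) : M₀ → ℝ :=
  Quot.lift (fun x : M ↦ Q x) fun x y ⟨g, hg, hxy⟩ ↦ by rw [hxy, hQ g hg]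

theorem mem_RegM_two_iff {f : M₀ → ℝ} :
    f ∈ RegM 2 ↔ ∃ Q : QuadraticForm ℝ ((Fin 3 → ℂ) × (Fin 3 → ℂ)),
      IsSO3Invariant Q ∧ ∀ x : M, f (Quot.mk _ x) = Q x := by
  let e := LinearEquiv.sumArrowLequivProdArrow (Fin 3) (Fin 3) ℝ ℂ
  constructor
  · rintro ⟨p, hp, hinv, hf⟩
    obtain ⟨Q, hQ⟩ := exists_isHomogeneous_two_evalR_iff.1 ⟨p, hp, fun _ ↦ rfl⟩
    have hQ_cc (z) : Q.comp e.symm.toLinearMap z = evalR p (cc z) := hQ (cc z)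
    exact ⟨Q.comp e.symm.toLinearMap, fun g hg z ↦ by rw [hQ_cc, hQ_cc, hinv g hg],
      fun x ↦ (hf x).trans (hQ_cc x).symm⟩
  · rintro ⟨Q, hQ, hf⟩
    obtain ⟨p, hp, hpQ⟩ := exists_isHomogeneous_two_evalR_iff.2 ⟨Q.comp e.toLinearMap, fun _ ↦ rfl⟩
    have hp_cc (z) : evalR p (cc z) = Q z := hpQ (cc z)
    exact ⟨p, hp, fun g hg z ↦ by rw [hp_cc, hp_cc, hQ g hg],
      fun x ↦ (hf x).trans (hp_cc x).symm⟩

theorem IsSO3Invariant.descend_mem_RegM {Q : QuadraticForm ℝ ((Fin 3 → ℂ) × (Fin 3 → ℂ))}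
    (hQ : IsSO3Invariant Q) : hQ.descend ∈ RegM 2 :=
  mem_RegM_two_iff.2 ⟨Q, hQ, fun _ ↦ rfl⟩

theorem IsSO3Invariant.descend_nonneg {Q : QuadraticForm ℝ ((Fin 3 → ℂ) × (Fin 3 → ℂ))}
    (hQ : IsSO3Invariant Q) (hQ_nonneg : ∀ z, 0 ≤ Q z) (y : M₀) : 0 ≤ hQ.descend y := by
  obtain ⟨x⟩ := y
  exact hQ_nonneg x

theorem IsSO3Invariant.add {P Q : QuadraticForm ℝ ((Fin 3 → ℂ) × (Fin 3 → ℂ))}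
    (hP : IsSO3Invariant P) (hQ : IsSO3Invariant Q) : IsSO3Invariant (P + Q) :=
  fun g hg z ↦ by simp [hP g hg z, hQ g hg z]

/-- The squared length on `ℝⁿ`, as a quadratic form. -/
def dotProductForm (n : Type*) [Fintype n] : QuadraticForm ℝ (n → ℝ) :=
  LinearMap.BilinMap.toQuadraticMap (dotProductBilin ℝ ℝ)

theorem dotProductForm_apply {n : Type*} [Fintype n] (v : n → ℝ) :
    dotProductForm n v = v ⬝ᵥ v :=
  rfl

theorem dotProductForm_nonneg {n : Type*} [Fintype n] (v : n → ℝ) : 0 ≤ dotProductForm n v := by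
  simpa [dotProductForm_apply] using dotProduct_self_star_nonneg v

theorem dotProductForm_eq_zero_iff {n : Type*} [Fintype n] {v : n → ℝ} :
    dotProductForm n v = 0 ↔ v = 0 :=
  dotProduct_self_eq_zero

theorem isSO3Invariant_dotProductForm_comp
    {L : ((Fin 3 → ℂ) × (Fin 3 → ℂ)) →ₗ[ℝ] Fin 3 → ℝ} (hL : ∀ g z, L (act g z) = g *ᵥ L z) :
    IsSO3Invariant ((dotProductForm (Fin 3)).comp L) := fun g hg z ↦ by
  rw [QuadraticMap.comp_apply, QuadraticMap.comp_apply, hL, dotProductForm_apply,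
    dotProductForm_apply, dotProduct_mulVec, vecMul_mulVec, mul_eq_one_comm.1 hg.1, vecMul_one]

/-- The real part of a complex vector. -/
def reVec (n : Type*) : (n → ℂ) →ₗ[ℝ] n → ℝ := reLm.compLeft n

/-- The imaginary part of a complex vector. -/
def imVec (n : Type*) : (n → ℂ) →ₗ[ℝ] n → ℝ := imLm.compLeft n

theorem reVec_map_ofReal_mulVec {m n : Type*} [Fintype n] (g : Matrix m n ℝ) (z : n → ℂ) :
    reVec m (g.map ofReal *ᵥ z) = g *ᵥ reVec n z := by
  ext i
  simp [reVec, mulVec, dotProduct]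

theorem imVec_map_ofReal_mulVec {m n : Type*} [Fintype n] (g : Matrix m n ℝ) (z : n → ℂ) :
    imVec m (g.map ofReal *ᵥ z) = g *ᵥ imVec n z := by
  ext i
  simp [imVec, mulVec, dotProduct]

/-- The map `z ↦ Re z₂ - t Re z₁`, whose vanishing says that the real parts have slope `t`. -/
def slopeMap (t : ℝ) : ((Fin 3 → ℂ) × (Fin 3 → ℂ)) →ₗ[ℝ] Fin 3 → ℝ :=
  reVec (Fin 3) ∘ₗ .snd ℝ _ _ - t • reVec (Fin 3) ∘ₗ .fst ℝ _ _

/-- The form `|Im z₁|² + |Im z₂|² + |Re z₂ - t Re z₁|²`, whose zeros are the pairs `(n, t n)`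
with `n` real. -/
def slopeForm (t : ℝ) : QuadraticForm ℝ ((Fin 3 → ℂ) × (Fin 3 → ℂ)) :=
  (dotProductForm (Fin 3)).comp (imVec (Fin 3) ∘ₗ .fst ℝ _ _) +
    (dotProductForm (Fin 3)).comp (imVec (Fin 3) ∘ₗ .snd ℝ _ _) +
    (dotProductForm (Fin 3)).comp (slopeMap t)

theorem slopeForm_apply (t : ℝ) (z : (Fin 3 → ℂ) × (Fin 3 → ℂ)) :
    slopeForm t z = dotProductForm _ (imVec _ z.1) + dotProductForm _ (imVec _ z.2) +
      dotProductForm _ (slopeMap t z) :=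
  rfl

theorem slopeForm_nonneg (t : ℝ) (z : (Fin 3 → ℂ) × (Fin 3 → ℂ)) : 0 ≤ slopeForm t z := by
  rw [slopeForm_apply]
  exact add_nonneg (add_nonneg (dotProductForm_nonneg _) (dotProductForm_nonneg _))
    (dotProductForm_nonneg _)

theorem isSO3Invariant_slopeForm (t : ℝ) : IsSO3Invariant (slopeForm t) := by
  refine ((isSO3Invariant_dotProductForm_comp fun g z ↦ ?_).add
    (isSO3Invariant_dotProductForm_comp fun g z ↦ ?_)).add
    (isSO3Invariant_dotProductForm_comp fun g z ↦ ?_)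
  · exact imVec_map_ofReal_mulVec g z.1
  · exact imVec_map_ofReal_mulVec g z.2
  · simp [slopeMap, act, reVec_map_ofReal_mulVec, mulVec_sub, mulVec_smul]

/-- The form `|Re z₁|²`, which tells apart the orbits of the pairs `(n, t n)` for fixed `t`. -/
def reFstForm : QuadraticForm ℝ ((Fin 3 → ℂ) × (Fin 3 → ℂ)) :=
  (dotProductForm (Fin 3)).comp (reVec (Fin 3) ∘ₗ .fst ℝ _ _)

theorem reFstForm_nonneg (z : (Fin 3 → ℂ) × (Fin 3 → ℂ)) : 0 ≤ reFstForm z :=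
  dotProductForm_nonneg (reVec _ z.1)

theorem isSO3Invariant_reFstForm : IsSO3Invariant reFstForm :=
  isSO3Invariant_dotProductForm_comp fun g z ↦ reVec_map_ofReal_mulVec g z.1

end InvariantsOfSO3

section RealPoints

open Matrix

/-- The real pair `(v, w)` as a point of `ℂ³ ⊕ ℂ³`. -/
def realPair (v w : Fin 3 → ℝ) : (Fin 3 → ℂ) × (Fin 3 → ℂ) := (ofReal ∘ v, ofReal ∘ w)

theorem realPair_add (v w v' w' : Fin 3 → ℝ) :
    realPair (v + v') (w + w') = realPair v w + realPair v' w' := by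
  ext i <;> simp [realPair]

theorem realPair_neg (v w : Fin 3 → ℝ) : realPair (-v) (-w) = -realPair v w := by
  ext i <;> simp [realPair]

theorem act_realPair (g : Matrix (Fin 3) (Fin 3) ℝ) (v w : Fin 3 → ℝ) :
    act g (realPair v w) = realPair (g *ᵥ v) (g *ᵥ w) := by
  ext i <;> simp [act, realPair, mulVec, dotProduct]

theorem pair_ofReal_comp (ξ : Matrix (Fin 3) (Fin 3) ℝ) (v : Fin 3 → ℝ) :
    pair ξ (ofReal ∘ v) = ((ξ *ᵥ v) ⬝ᵥ v : ℝ) := by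
  simp [pair, mulVec, dotProduct]

theorem realPair_mem_M (v w : Fin 3 → ℝ) : realPair v w ∈ M := fun ξ _ ↦ by
  simp only [realPair, pair_ofReal_comp, ← ofReal_add, ofReal_im]

/-- The point of `M₀` represented by the real pair `(v, w)`. -/
def realPoint (v w : Fin 3 → ℝ) : M₀ := Quot.mk _ ⟨realPair v w, realPair_mem_M v w⟩

theorem realPoint_mulVec {g : Matrix (Fin 3) (Fin 3) ℝ} (hg : g ∈ SO3) (v w : Fin 3 → ℝ) :
    realPoint (g *ᵥ v) (g *ᵥ w) = realPoint v w :=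
  (Quot.sound ⟨g, hg, (act_realPair g v w).symm⟩).symm

theorem realPoint_smul_eq_of_dotProduct_eq {n n' : Fin 3 → ℝ} (h : n ⬝ᵥ n = n' ⬝ᵥ n') (t : ℝ) :
    realPoint n (t • n) = realPoint n' (t • n') := by
  obtain ⟨g, hg, rfl⟩ := exists_mem_SO3_mulVec_eq h
  rw [← mulVec_smul, realPoint_mulVec hg]

theorem slopeForm_realPair (s t : ℝ) (n : Fin 3 → ℝ) :
    slopeForm s (realPair n (t • n)) = (t - s) ^ 2 * (n ⬝ᵥ n) := by
  have him (v : Fin 3 → ℝ) : imVec _ (ofReal ∘ v) = 0 := by ext i; simp [imVec]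
  have hre (v : Fin 3 → ℝ) : reVec _ (ofReal ∘ v) = v := by ext i; simp [reVec]
  have hslope : slopeMap s (realPair n (t • n)) = (t - s) • n := by
    simp [slopeMap, realPair, hre, sub_smul]
  rw [slopeForm_apply, hslope, realPair, him, him, QuadraticMap.map_zero, add_zero, zero_add,
    QuadraticMap.map_smul, dotProductForm_apply, smul_eq_mul, pow_two]

theorem eq_realPair_of_slopeForm_eq_zero {t : ℝ} {z : (Fin 3 → ℂ) × (Fin 3 → ℂ)}
    (hz : slopeForm t z = 0) : ∃ n, z = realPair n (t • n) := by
  have h₁ := dotProductForm_nonneg (imVec _ z.1)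
  have h₂ := dotProductForm_nonneg (imVec _ z.2)
  have h₃ := dotProductForm_nonneg (slopeMap t z)
  rw [slopeForm_apply] at hz
  have him₁ : imVec _ z.1 = 0 := dotProductForm_eq_zero_iff.1 (by linarith)
  have him₂ : imVec _ z.2 = 0 := dotProductForm_eq_zero_iff.1 (by linarith)
  have hslope : reVec _ z.2 = t • reVec _ z.1 :=
    sub_eq_zero.1 (dotProductForm_eq_zero_iff.1 (by linarith) : slopeMap t z = 0)
  refine ⟨reVec _ z.1, ?_⟩
  rw [← hslope]
  ext i
  · exact Complex.ext rfl (congrFun him₁ i)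
  · exact Complex.ext rfl (congrFun him₂ i)

theorem apply_realPoint_add {f : M₀ → ℝ} (hf : f ∈ RegM 2) {n n' : Fin 3 → ℝ} (hn : n ≠ 0)
    (horth : n ⬝ᵥ n' = 0) (s t : ℝ) :
    f (realPoint (n + n') (s • n + t • n')) =
      f (realPoint n (s • n)) + f (realPoint n' (t • n')) := by
  obtain ⟨Q, hQ, hfQ⟩ := mem_RegM_two_iff.1 hf
  set a := realPair n (s • n)
  set b := realPair n' (t • n')
  have hact : act (halfTurn n) (a + b) = a - b := by
    rw [← realPair_add, act_realPair]
    simp only [mulVec_add, mulVec_smul, halfTurn_mulVec_self hn,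
      halfTurn_mulVec_of_dotProduct_eq_zero horth, smul_neg, realPair_add, realPair_neg]
    exact (sub_eq_add_neg a b).symm
  have hparallelogram : Q (a + b) + Q (a - b) = 2 * (Q a + Q b) :=
    quadraticForm_map_add_add_map_sub Q a b
  rw [← hact, hQ _ (halfTurn_mem_SO3 hn)] at hparallelogram
  have hadd : Q (a + b) = Q a + Q b := by linarith
  simpa only [realPoint, hfQ, realPair_add] using hadd

end RealPoints

section QuadraticCharts

variable {G V X : Type*} [Group G] [AddCommGroup V] [Module ℝ V]

/-- A presentation of `X` as an orbit space `V / G` of a real representation `ρ`, for which `A` is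
the set of functions on `X` that pull back to quadratic forms on `V`. -/
structure IsQuadraticChart (ρ : Representation ℝ G V) (A : Set (X → ℝ)) (π : V → X) : Prop where
  surjective : Function.Surjective π
  apply_eq_iff {v w : V} : π v = π w ↔ ∃ g, ρ g v = w
  mem_iff {f : X → ℝ} : f ∈ A ↔ ∃ Q : QuadraticForm ℝ V, ∀ v, Q v = f (π v)

namespace IsQuadraticChart

variable {ρ : Representation ℝ G V} {A : Set (X → ℝ)} {π : V → X} (hπ : IsQuadraticChart ρ A π)

include hπ

theorem apply_representation (g : G) (v : V) : π (ρ g v) = π v :=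
  (hπ.apply_eq_iff.2 ⟨g, rfl⟩).symm

theorem exists_mem_of_invariant {Q : QuadraticForm ℝ V} (hQ : ∀ g v, Q (ρ g v) = Q v) :
    ∃ f ∈ A, ∀ v, Q v = f (π v) := by
  have hQπ (v : V) : Q v = Q (Function.surjInv hπ.surjective (π v)) := by
    obtain ⟨g, hg⟩ := hπ.apply_eq_iff.1 (Function.surjInv_eq hπ.surjective (π v)).symm
    rw [← hg, hQ]
  exact ⟨fun y ↦ Q (Function.surjInv hπ.surjective y), hπ.mem_iff.2 ⟨Q, hQπ⟩, hQπ⟩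

theorem exists_mem_span_singleton_of_apply_eq_zero {e f : X → ℝ} (he : e ∈ A)
    (he_nonneg : ∀ y, 0 ≤ e y) (hf : f ∈ A)
    (hsep : ∀ y y', f y = 0 → f y' = 0 → e y = e y' → y = y') {w : V}
    (hfw : f (π w) = 0) (hew : e (π w) ≠ 0) {v : V} (hfv : f (π v) = 0) :
    ∃ g, v ∈ ℝ ∙ ρ g w := by
  obtain ⟨E, hE⟩ := hπ.mem_iff.1 he
  obtain ⟨F, hF⟩ := hπ.mem_iff.1 hf
  set s := √(e (π v) / e (π w))
  have hs : s * s = e (π v) / e (π w) :=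
    Real.mul_self_sqrt (div_nonneg (he_nonneg _) (he_nonneg _))
  have hfs : f (π (s • w)) = 0 := by
    rw [← hF, QuadraticMap.map_smul, hF, hfw, smul_zero]
  have hes : e (π (s • w)) = e (π v) := by
    rw [← hE, QuadraticMap.map_smul, hE, hs, smul_eq_mul, div_mul_cancel₀ _ hew]
  obtain ⟨g, hg⟩ := hπ.apply_eq_iff.1 (hsep _ _ hfs hfv hes)
  exact ⟨g, Submodule.mem_span_singleton.2 ⟨s, by rw [← hg, map_smul]⟩⟩

theorem representation_apply_eq_or_eq_neg [Finite G] {e f : X → ℝ} (he : e ∈ A)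
    (he_nonneg : ∀ y, 0 ≤ e y) (hf : f ∈ A) (hf_nonneg : ∀ y, 0 ≤ f y)
    (hsep : ∀ y y', f y = 0 → f y' = 0 → e y = e y' → y = y') {w : V}
    (hfw : f (π w) = 0) (hew : e (π w) ≠ 0) (g : G) : ρ g w = w ∨ ρ g w = -w := by
  obtain ⟨E, hE⟩ := hπ.mem_iff.1 he
  obtain ⟨F, hF⟩ := hπ.mem_iff.1 hf
  have hmem (v : V) : v ∈ F.radical ↔ f (π v) = 0 := by
    rw [← apply_eq_zero_iff_mem_radical_of_nonneg fun v ↦ hF v ▸ hf_nonneg _, hF]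
  obtain ⟨k, hk⟩ : ∃ k, F.radical ≤ ℝ ∙ ρ k w := le_of_subset_iUnion_subspace fun v hv ↦
    Set.mem_iUnion.2
      (hπ.exists_mem_span_singleton_of_apply_eq_zero he he_nonneg hf hsep hfw hew ((hmem v).1 hv))
  have hline (h : G) : ∃ x : ℝ, x • ρ k w = ρ h w ∧ x ^ 2 = 1 := by
    have hρ : ρ h w ∈ F.radical := (hmem _).2 (by rwa [hπ.apply_representation])
    obtain ⟨x, hx⟩ := Submodule.mem_span_singleton.1 (hk hρ)
    have hEx := congrArg E hx
    rw [QuadraticMap.map_smul, hE, hE, hπ.apply_representation, hπ.apply_representation,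
      smul_eq_mul, mul_eq_right₀ hew, ← pow_two] at hEx
    exact ⟨x, hx, hEx⟩
  obtain ⟨x, hx, hx_sq⟩ := hline 1
  obtain ⟨y, hy, hy_sq⟩ := hline g
  rw [map_one, Module.End.one_apply] at hx
  rcases sq_eq_sq_iff_eq_or_eq_neg.1 (hy_sq.trans hx_sq.symm) with rfl | rfl
  · exact .inl (hy.symm.trans hx)
  · exact .inr (by rw [← hy, neg_smul, hx])

theorem not_linearIndependent_of_same_sign [Finite G] {a b c : V}
    (hsign : ∀ g, (ρ g a = a ∧ ρ g b = b) ∨ (ρ g a = -a ∧ ρ g b = -b))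
    (hadd : ∀ f ∈ A, f (π c) = f (π a) + f (π b)) : ¬LinearIndependent ℝ ![a, b] := by
  refine not_linearIndependent_pair_of_same_sign (c := c) hsign fun Q hQ ↦ ?_
  obtain ⟨f, hf, hQf⟩ := hπ.exists_mem_of_invariant hQ
  rw [hQf, hQf, hQf, hadd f hf]

end IsQuadraticChart

end QuadraticCharts

section QuotientOfRealPoints

open Matrix

/-- The function on `M₀` induced by `slopeForm t`. -/
def slopeDefect (t : ℝ) : M₀ → ℝ := (isSO3Invariant_slopeForm t).descend

/-- The function on `M₀` induced by `reFstForm`. -/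
def reFstNormSq : M₀ → ℝ := isSO3Invariant_reFstForm.descend

theorem slopeDefect_mem_RegM (t : ℝ) : slopeDefect t ∈ RegM 2 :=
  (isSO3Invariant_slopeForm t).descend_mem_RegM

theorem reFstNormSq_mem_RegM : reFstNormSq ∈ RegM 2 :=
  isSO3Invariant_reFstForm.descend_mem_RegM

theorem slopeDefect_nonneg (t : ℝ) (y : M₀) : 0 ≤ slopeDefect t y :=
  (isSO3Invariant_slopeForm t).descend_nonneg (slopeForm_nonneg t) y

theorem reFstNormSq_nonneg (y : M₀) : 0 ≤ reFstNormSq y :=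
  isSO3Invariant_reFstForm.descend_nonneg reFstForm_nonneg y

theorem slopeDefect_realPoint (s t : ℝ) (n : Fin 3 → ℝ) :
    slopeDefect s (realPoint n (t • n)) = (t - s) ^ 2 * (n ⬝ᵥ n) :=
  slopeForm_realPair s t n

theorem reFstNormSq_realPoint (v w : Fin 3 → ℝ) : reFstNormSq (realPoint v w) = v ⬝ᵥ v :=
  rfl

theorem eq_of_slopeDefect_eq_zero {t : ℝ} {y y' : M₀} (hy : slopeDefect t y = 0)
    (hy' : slopeDefect t y' = 0) (h : reFstNormSq y = reFstNormSq y') : y = y' := by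
  have exists_realPoint {y : M₀} (hy : slopeDefect t y = 0) : ∃ n, y = realPoint n (t • n) := by
    induction y using Quot.ind with
    | mk x =>
      obtain ⟨n, hn⟩ := eq_realPair_of_slopeForm_eq_zero hy
      exact ⟨n, congrArg (Quot.mk relM) (Subtype.ext hn)⟩
  obtain ⟨n, rfl⟩ := exists_realPoint hy
  obtain ⟨n', rfl⟩ := exists_realPoint hy'
  exact realPoint_smul_eq_of_dotProduct_eq h t

end QuotientOfRealPoints

section NoChart

variable {G V : Type*} [Group G] [AddCommGroup V] [Module ℝ V]
  {ρ : Representation ℝ G V} {π : V → M₀}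

theorem linearIndependent_pair_of_realPoint (hπ : IsQuadraticChart ρ (RegM 2) π) {s t : ℝ}
    (hst : s ≠ t) {n : Fin 3 → ℝ} (hn : n ≠ 0) {a b : V}
    (ha : π a = realPoint n (s • n)) (hb : π b = realPoint n (t • n)) :
    LinearIndependent ℝ ![a, b] := by
  obtain ⟨P, hP⟩ := hπ.mem_iff.1 (slopeDefect_mem_RegM s)
  obtain ⟨Q, hQ⟩ := hπ.mem_iff.1 (slopeDefect_mem_RegM t)
  apply linearIndependent_pair_of_quadraticForm P Q
  · simp [hP, ha, slopeDefect_realPoint]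
  · simp [hP, hb, slopeDefect_realPoint, sub_ne_zero.2 hst.symm, hn]
  · simp [hQ, ha, slopeDefect_realPoint, sub_ne_zero.2 hst, hn]
  · simp [hQ, hb, slopeDefect_realPoint]

variable [Finite G]

theorem representation_apply_eq_or_eq_neg_of_realPoint (hπ : IsQuadraticChart ρ (RegM 2) π)
    {t : ℝ} {n : Fin 3 → ℝ} (hn : n ≠ 0) {w : V} (hw : π w = realPoint n (t • n)) (g : G) :
    ρ g w = w ∨ ρ g w = -w :=
  hπ.representation_apply_eq_or_eq_neg reFstNormSq_mem_RegM reFstNormSq_nonneg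
    (slopeDefect_mem_RegM t) (slopeDefect_nonneg t) (fun _ _ ↦ eq_of_slopeDefect_eq_zero)
    (by simp [hw, slopeDefect_realPoint]) (by simp [hw, reFstNormSq_realPoint, hn]) g

theorem not_isQuadraticChart_RegM_two : ¬IsQuadraticChart ρ (RegM 2) π := by
  intro hπ
  set n : Fin 3 → ℝ := Pi.single 0 1 with hn
  set n' : Fin 3 → ℝ := Pi.single 1 1 with hn'
  have hn_ne : n ≠ 0 := by simp [hn]
  choose w hw using fun t : ℝ ↦ hπ.surjective (realPoint n (t • n))
  obtain ⟨s, t, hst, hsame⟩ := Finite.exists_ne_map_eq_of_infinite fun t ↦ {g | ρ g (w t) = w t}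
  have hsign (g : G) :
      (ρ g (w s) = w s ∧ ρ g (w t) = w t) ∨ (ρ g (w s) = -w s ∧ ρ g (w t) = -w t) := by
    have hiff : ρ g (w s) = w s ↔ ρ g (w t) = w t := Set.ext_iff.1 hsame g
    have hs := representation_apply_eq_or_eq_neg_of_realPoint hπ hn_ne (hw s) g
    have ht := representation_apply_eq_or_eq_neg_of_realPoint hπ hn_ne (hw t) g
    tauto
  obtain ⟨c, hc⟩ := hπ.surjective (realPoint (n + n') (s • n + t • n'))
  refine hπ.not_linearIndependent_of_same_sign (c := c) hsign (fun f hf ↦ ?_)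
    (linearIndependent_pair_of_realPoint hπ hst hn_ne (hw s) (hw t))
  rw [hc, apply_realPoint_add hf hn_ne (by simp [hn, hn']), hw, hw,
    realPoint_smul_eq_of_dotProduct_eq (n := n') (n' := n) (by simp [hn, hn'])]

end NoChart

section Orbifolds

variable {m : ℕ} {H : Subgroup (Matrix.unitaryGroup (Fin m) ℂ)}

/-- The action of a group of unitary matrices on `ℂᵐ`, as a real representation. -/
def unitaryRepresentation (H : Subgroup (Matrix.unitaryGroup (Fin m) ℂ)) :
    Representation ℝ H (Fin m → ℂ) where
  toFun h := (Matrix.mulVecLin (h : Matrix (Fin m) (Fin m) ℂ)).restrictScalars ℝ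
  map_one' := by ext; simp
  map_mul' g h := by ext; simp

theorem unitaryRepresentation_apply (h : H) (v : Fin m → ℂ) :
    unitaryRepresentation H h v = (h : Matrix (Fin m) (Fin m) ℂ).mulVec v :=
  rfl

theorem mk_relH_eq_iff {v w : Fin m → ℂ} :
    Quot.mk (relH m H) v = Quot.mk (relH m H) w ↔ ∃ h, unitaryRepresentation H h v = w := by
  have hrel (v w) : relH m H v w ↔ ∃ h, unitaryRepresentation H h v = w := by
    simp [relH, unitaryRepresentation_apply, eq_comm]
  have hequiv : Equivalence (relH m H) := by
    refine ⟨fun v ↦ (hrel v v).2 ⟨1, by simp⟩, fun {v w} hvw ↦ ?_, fun {u v w} huv hvw ↦ ?_⟩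
    · obtain ⟨h, rfl⟩ := (hrel v w).1 hvw
      exact (hrel _ v).2 ⟨h⁻¹, by simp⟩
    · obtain ⟨g, rfl⟩ := (hrel u v).1 huv
      obtain ⟨h, rfl⟩ := (hrel _ w).1 hvw
      exact (hrel u _).2 ⟨h * g, by simp⟩
  rw [Quot.eq, hequiv.eqvGen_iff, hrel]

theorem mem_RegY_two_iff {f : Y m H → ℝ} :
    f ∈ RegY m H 2 ↔ ∃ Q : QuadraticForm ℝ (Fin m → ℂ), ∀ v, Q v = f (Quot.mk _ v) := by
  rw [← exists_isHomogeneous_two_evalR_iff]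
  constructor
  · rintro ⟨p, hp, -, hf⟩
    exact ⟨p, hp, fun v ↦ (hf v).symm⟩
  · rintro ⟨p, hp, hf⟩
    refine ⟨p, hp, fun h hh v ↦ ?_, fun v ↦ (hf v).symm⟩
    rw [hf, hf]
    exact congrArg f (mk_relH_eq_iff.2 ⟨⟨h, hh⟩, rfl⟩).symm

theorem isQuadraticChart_of_image_RegY_eq (χ : M₀ ≃ Y m H)
    (hχ : (fun f : Y m H → ℝ => f ∘ ⇑χ) '' RegY m H 2 = RegM 2) :
    IsQuadraticChart (unitaryRepresentation H) (RegM 2) fun v ↦ χ.symm (Quot.mk _ v) where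
  surjective := χ.symm.surjective.comp Quot.mk_surjective
  apply_eq_iff := χ.symm.injective.eq_iff.trans mk_relH_eq_iff
  mem_iff {f} := by
    have hmem : f ∈ RegM 2 ↔ f ∘ χ.symm ∈ RegY m H 2 := by
      rw [← hχ]
      constructor
      · rintro ⟨f, hf, rfl⟩
        simpa [Function.comp_assoc] using hf
      · exact fun hf ↦ ⟨_, hf, by simp [Function.comp_assoc]⟩
    exact hmem.trans mem_RegY_two_iff

end Orbifolds

theorem no_graded_regular_diffeomorphism_2R2_general
    (m : ℕ) (H : Subgroup (Matrix.unitaryGroup (Fin m) ℂ))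
    (hH : (H : Set (Matrix.unitaryGroup (Fin m) ℂ)).Finite) :
    ¬ ∃ χ : M₀ ≃ Y m H, (fun f : Y m H → ℝ => f ∘ ⇑χ) '' RegY m H 2 = RegM 2 := by
  rintro ⟨χ, hχ⟩
  have : Finite H := hH.to_subtype
  exact not_isQuadraticChart_RegM_two (isQuadraticChart_of_image_RegY_eq χ hχ)

/-- There is no ℤ-graded regular diffeomorphism from the symplectic quotient of the
SO(3)-module ℂ³ ⊕ ℂ³ (i.e. the SU(2)-module 2R₂) to any linear symplectic orbifold. -/
theorem no_graded_regular_diffeomorphism_2R2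
    (m : ℕ) (hm : 1 ≤ m) (H : Subgroup (Matrix.unitaryGroup (Fin m) ℂ))
    (hH : (H : Set (Matrix.unitaryGroup (Fin m) ℂ)).Finite) :
    ¬ ∃ χ : M₀ ≃ₜ Y m H,
        ∀ d : ℕ, (fun f : Y m H → ℝ => f ∘ ⇑χ) '' RegY m H d = RegM d := by
  rintro ⟨χ, hχ⟩
  exact no_graded_regular_diffeomorphism_2R2_general m H hH ⟨χ.toEquiv, hχ 2⟩

end

end Stmt8
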